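/- arXiv:2510.09929 — 5 statements merged into one kernel-verified Lean document; each statement's English description precedes it below -/
import Mathlib

section
/- Let h : ℝ^n → [0,∞) be continuous and define the avoid value function V : ℝ^n × [0,∞) → [0,∞) by V(x,T) = sup over pairs (u, ξ) of control signals u ∈ 𝕌 and admissible trajectories ξ from x under u of min_{t ∈ [0,T]} h(ξ(t)). Then V is time-invariant (i.e., V(x,T) = h(x) for all x ∈ ℝ^n and T ≥ 0) if and only if h is a viscosity CBF with respect to every locally Lipschitz class K function α. -/
open Set Filter MeasureTheory Topology

noncomputable section

/-- `α : [0,∞) → [0,∞)` is a class `K` function: continuous, strictly increasing, `α 0 = 0`. -/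
def IsClassK (α : ℝ → ℝ) : Prop :=
  ContinuousOn α (Set.Ici 0) ∧ StrictMonoOn α (Set.Ici 0) ∧ α 0 = 0

/-- `α` is a locally Lipschitz class `K` function on `[0,∞)`. -/
def IsLocallyLipschitzClassK (α : ℝ → ℝ) : Prop :=
  IsClassK α ∧
    ∀ x ∈ Set.Ici (0 : ℝ), ∃ K : NNReal, ∃ s ∈ nhdsWithin x (Set.Ici (0 : ℝ)),
      LipschitzOnWith K α s

/-- `u` is an admissible control signal: measurable, valued in `U` on `[0,∞)`. -/
def IsControl {m : ℕ} (U : Set (Fin m → ℝ)) (u : ℝ → Fin m → ℝ) : Prop :=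
  Measurable u ∧ ∀ t : ℝ, 0 ≤ t → u t ∈ U

/-- `ξ` is an admissible trajectory from `x` under the control signal `u`. -/
def IsTrajectory {n m : ℕ} (f : (Fin n → ℝ) → (Fin m → ℝ) → Fin n → ℝ)
    (x : Fin n → ℝ) (u : ℝ → Fin m → ℝ) (ξ : ℝ → Fin n → ℝ) : Prop :=
  Continuous ξ ∧ ∀ t : ℝ, 0 ≤ t → ξ t = x + ∫ s in (0 : ℝ)..t, f (ξ s) (u s)

/-- `h` is a viscosity CBF with respect to `α`: for every `x` with `h x > 0` and every `C¹`
test function `φ` such that `h - φ` has a local maximum at `x`, one has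
`max_{u ∈ U} ∇φ(x) · f(x,u) ≥ -α (h x)`. -/
def IsViscosityCBF {n m : ℕ} (f : (Fin n → ℝ) → (Fin m → ℝ) → Fin n → ℝ)
    (U : Set (Fin m → ℝ)) (α : ℝ → ℝ) (h : (Fin n → ℝ) → ℝ) : Prop :=
  Continuous h ∧
    ∀ x : Fin n → ℝ, 0 < h x →
      ∀ φ : (Fin n → ℝ) → ℝ, ContDiff ℝ 1 φ →
        IsLocalMax (fun y => h y - φ y) x →
        -α (h x) ≤ sSup ((fun u => fderiv ℝ φ x (f x u)) '' U)

/-!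
Both conditions are equivalent to the viscosity inequality with `α = 0`, because linear class `K`
functions of small slope make the slack `α (h x)` arbitrarily small.

If that inequality fails at `x` for a test function `φ`, then `φ`, and with it `h`, decreases at a
uniform rate along every trajectory from `x` for short times, so the value drops below `h x`.

Conversely, replace `h` by its sup-convolution over a large ball. At a point attaining the supremum
for the state `y`, the viscosity inequality tested on a paraboloid provides a control that does not
push away from that point. Holding this control over short sampling periods makes the
sup-convolution decrease arbitrarily slowly along the resulting trajectory, and `h` stays uniformly
close to it.
-/

/-! ### Right-differentiable curves -/

lemma eventually_const_mul_lt (a : ℝ) {b : ℝ} (hb : 0 < b) : ∀ᶠ s in 𝓝[>] (0 : ℝ), a * s < b :=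
  nhdsWithin_le_nhds <|
    (by fun_prop : ContinuousAt (fun s : ℝ => a * s) 0).eventually_lt_const (by simpa using hb)

section RightDerivative

variable {E : Type*} [NormedAddCommGroup E]

lemma norm_le_of_lipschitzWith {v : E → E} {K : NNReal} (hv : LipschitzWith K v) (x y : E) {C : ℝ}
    (hC : ‖v x‖ ≤ C) : ‖v y‖ ≤ K * ‖y - x‖ + C :=
  (norm_le_norm_sub_add _ (v x)).trans (add_le_add (hv.norm_sub_le y x) hC)

lemma isPicardLindelof_of_lipschitzWith {v : E → E} {K s : NNReal} (hv : LipschitzWith K v)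
    (hsK : 2 * K * s ≤ 1) (y : E) :
    IsPicardLindelof (fun _ : ℝ => v) (⟨0, le_rfl, s.2⟩ : Icc (0 : ℝ) s) y (2 * s * ‖v y‖₊) 0
      (2 * ‖v y‖₊) K where
  lipschitzOnWith _ _ := hv.lipschitzOnWith
  continuousOn _ _ := continuousOn_const
  norm_le _ _ z hz := by
    have hzy : ‖z - y‖ ≤ 2 * s * ‖v y‖ := by simpa [dist_eq_norm] using hz
    have hsK' : 2 * (K : ℝ) * s ≤ 1 := by exact_mod_cast hsK
    calc ‖v z‖ ≤ ‖v z - v y‖ + ‖v y‖ := norm_le_norm_sub_add _ _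
      _ ≤ K * (2 * s * ‖v y‖) + ‖v y‖ := by
        gcongr
        exact (hv.norm_sub_le z y).trans (by gcongr)
      _ = 2 * K * s * ‖v y‖ + ‖v y‖ := by ring
      _ ≤ 1 * ‖v y‖ + ‖v y‖ := by gcongr
      _ = (2 * ‖v y‖₊ : NNReal) := by push_cast; ring
  mul_max_le := by
    have hmax : max ((s : ℝ) - 0) (0 - 0) = s := by simp
    simp only [hmax]
    push_cast
    exact le_of_eq (by ring)

variable [NormedSpace ℝ E]

lemma lipschitzOnWith_of_norm_deriv_right_le {ξ ξ' : ℝ → E} {a b : ℝ} {M : NNReal}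
    (hξ : ContinuousOn ξ (Icc a b))
    (hderiv : ∀ t ∈ Ico a b, HasDerivWithinAt ξ (ξ' t) (Ici t) t)
    (hM : ∀ t ∈ Ico a b, ‖ξ' t‖ ≤ M) : LipschitzOnWith M ξ (Icc a b) := by
  have forward : ∀ r ∈ Icc a b, ∀ t ∈ Icc a b, r ≤ t → dist (ξ t) (ξ r) ≤ M * dist t r := by
    intro r hr t ht hrt
    rw [dist_eq_norm, Real.dist_eq, abs_of_nonneg (sub_nonneg.2 hrt)]
    exact norm_image_sub_le_of_norm_deriv_right_le_segment (hξ.mono (Icc_subset_Icc_left hr.1))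
      (fun q hq => hderiv q ⟨hr.1.trans hq.1, hq.2⟩)
      (fun q hq => hM q ⟨hr.1.trans hq.1, hq.2⟩) t ⟨hrt, ht.2⟩
  refine LipschitzOnWith.of_dist_le_mul fun t ht r hr => ?_
  rcases le_total r t with hrt | htr
  · exact forward r hr t ht hrt
  · rw [dist_comm (ξ t), dist_comm t]
    exact forward t ht r hr htr

lemma exists_integralCurve_of_lipschitzWith [CompleteSpace E] {v : E → E} {K s : NNReal}
    (hv : LipschitzWith K v) (hsK : 2 * K * s ≤ 1) (y : E) :
    ∃ ζ : ℝ → E, Continuous ζ ∧ ζ 0 = y ∧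
      ∀ t ∈ Ico (0 : ℝ) s, HasDerivWithinAt ζ (v (ζ t)) (Ici t) t := by
  obtain ⟨β, hβ0, hβ⟩ :=
    (isPicardLindelof_of_lipschitzWith hv hsK y).exists_eq_forall_mem_Icc_hasDerivWithinAt₀
  have hβc : ContinuousOn β (Icc 0 s) := fun t ht => (hβ t ht).continuousWithinAt
  have hext : EqOn (IccExtend s.2 ((Icc 0 (s : ℝ)).domRestrict β)) β (Icc 0 s) := fun t ht =>
    IccExtend_of_mem _ _ ht
  refine ⟨IccExtend s.2 ((Icc 0 (s : ℝ)).domRestrict β),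
    (continuousOn_iff_continuous_domRestrict.1 hβc).Icc_extend', ?_, fun t ht => ?_⟩
  · exact (hext ⟨le_rfl, s.2⟩).trans hβ0
  · have ht' : t ∈ Icc (0 : ℝ) s := Ico_subset_Icc_self ht
    rw [hext ht']
    exact ((hβ t ht').congr hext (hext ht')).mono_of_mem_nhdsWithin <|
      mem_of_superset (Ico_mem_nhdsGE ht.2) fun r hr => ⟨ht.1.trans hr.1, hr.2.le⟩

end RightDerivative

/-! ### Sampled feedback -/

section Concatenation

variable {E : Type*}

/-- The curve obtained from `x` by restarting the flow `Φ` (`Φ y t` is the state at time `t` when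
started at `y`) at each multiple of `s`. -/
def concatFlow (Φ : E → ℝ → E) (s : ℝ) (x : E) (t : ℝ) : E :=
  Φ ((fun y => Φ y s)^[⌊t / s⌋₊] x) (t - ⌊t / s⌋₊ * s)

lemma natFloor_div_eq_of_mem_Ico {s t : ℝ} (hs : 0 < s) {k : ℕ}
    (ht : t ∈ Ico (k * s) ((k + 1) * s)) : ⌊t / s⌋₊ = k := by
  have ht0 : 0 ≤ t := le_trans (by positivity) ht.1
  exact (Nat.floor_eq_iff (by positivity)).2 ⟨(le_div_iff₀ hs).2 ht.1, (div_lt_iff₀ hs).2 ht.2⟩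

lemma mem_Ico_natFloor_div_mul {s t : ℝ} (hs : 0 < s) (ht : 0 ≤ t) :
    t ∈ Ico (⌊t / s⌋₊ * s) ((⌊t / s⌋₊ + 1) * s) :=
  ⟨(le_div_iff₀ hs).1 (Nat.floor_le (by positivity)), (div_lt_iff₀ hs).1 (Nat.lt_floor_add_one _)⟩

lemma left_mem_sampleInterval {s : ℝ} (hs : 0 < s) (k : ℕ) :
    (k : ℝ) * s ∈ Ico (k * s) ((k + 1) * s) :=
  ⟨le_rfl, by linarith⟩

variable {Φ : E → ℝ → E} {s : ℝ} {x : E}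

lemma concatFlow_mul (hs : 0 < s) (hΦ0 : ∀ y, Φ y 0 = y) (k : ℕ) :
    concatFlow Φ s x (k * s) = (fun y => Φ y s)^[k] x := by
  rw [concatFlow, natFloor_div_eq_of_mem_Ico hs (left_mem_sampleInterval hs k), sub_self, hΦ0]

lemma concatFlow_of_mem_Icc (hs : 0 < s) (hΦ0 : ∀ y, Φ y 0 = y) {k : ℕ} {t : ℝ}
    (ht : t ∈ Icc (k * s) ((k + 1) * s)) :
    concatFlow Φ s x t = Φ (concatFlow Φ s x (k * s)) (t - k * s) := by
  rw [concatFlow_mul hs hΦ0]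
  rcases ht.2.lt_or_eq with hlt | rfl
  · rw [concatFlow, natFloor_div_eq_of_mem_Ico hs ⟨ht.1, hlt⟩]
  · rw [← Nat.cast_succ, concatFlow_mul hs hΦ0, Function.iterate_succ_apply']
    congr 1
    push_cast
    ring

lemma concatFlow_of_nonpos (hs : 0 < s) {t : ℝ} (ht : t ≤ 0) : concatFlow Φ s x t = Φ x t := by
  simp [concatFlow, Nat.floor_of_nonpos (div_nonpos_of_nonpos_of_nonneg ht hs.le)]

lemma continuousOn_concatFlow_Iic [TopologicalSpace E] (hs : 0 < s) (hΦ0 : ∀ y, Φ y 0 = y)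
    (hΦ : ∀ y, Continuous (Φ y)) (k : ℕ) : ContinuousOn (concatFlow Φ s x) (Iic (k * s)) := by
  induction k with
  | zero =>
    refine (hΦ x).continuousOn.congr fun t ht => concatFlow_of_nonpos hs ?_
    simpa using ht
  | succ k ih =>
    have hpiece : ContinuousOn (concatFlow Φ s x) (Icc (k * s) ((k + 1) * s)) :=
      ((hΦ _).comp (by fun_prop : Continuous fun t : ℝ => t - k * s)).continuousOn.congr
        fun t ht => concatFlow_of_mem_Icc hs hΦ0 ht
    refine (ih.union_of_isClosed hpiece isClosed_Iic isClosed_Icc).mono fun t ht => ?_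
    rw [mem_Iic, Nat.cast_succ] at ht
    exact (le_total t (k * s)).imp id fun hkt => ⟨hkt, ht⟩

lemma continuous_concatFlow [TopologicalSpace E] (hs : 0 < s) (hΦ0 : ∀ y, Φ y 0 = y)
    (hΦ : ∀ y, Continuous (Φ y)) : Continuous (concatFlow Φ s x) := by
  refine continuous_iff_continuousAt.2 fun t => ?_
  obtain ⟨k, hk⟩ := exists_nat_gt (t / s)
  exact (continuousOn_concatFlow_Iic hs hΦ0 hΦ k).continuousAt
    (Iic_mem_nhds ((div_lt_iff₀ hs).1 hk))

lemma hasDerivWithinAt_concatFlow [NormedAddCommGroup E] [NormedSpace ℝ E] {v : E → E → E}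
    (hs : 0 < s) (hΦ0 : ∀ y, Φ y 0 = y)
    (hΦ' : ∀ y, ∀ t ∈ Ico 0 s, HasDerivWithinAt (Φ y) (v y (Φ y t)) (Ici t) t) {t : ℝ}
    (ht : 0 ≤ t) :
    HasDerivWithinAt (concatFlow Φ s x)
      (v (concatFlow Φ s x (⌊t / s⌋₊ * s)) (concatFlow Φ s x t)) (Ici t) t := by
  have htk := mem_Ico_natFloor_div_mul hs ht
  set k := ⌊t / s⌋₊
  set y := concatFlow Φ s x (k * s)
  have hpiece : EqOn (concatFlow Φ s x) (fun r => Φ y (r - k * s)) (Ico t ((k + 1) * s)) :=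
    fun r hr => concatFlow_of_mem_Icc hs hΦ0 ⟨htk.1.trans hr.1, hr.2.le⟩
  have hshift : HasDerivWithinAt (fun r => Φ y (r - k * s)) (v y (Φ y (t - k * s))) (Ici t) t := by
    have hcomp := HasDerivWithinAt.scomp t
      (hΦ' y (t - k * s) ⟨by linarith [htk.1], by linarith [htk.2]⟩)
      ((hasDerivWithinAt_id t (Ici t)).sub_const (k * s)) fun r hr => sub_le_sub_right hr _
    rwa [one_smul] at hcomp
  rw [hpiece ⟨le_rfl, htk.2⟩]
  exact hshift.congr_of_eventuallyEq_of_mem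
    (eventually_of_mem (Ico_mem_nhdsGE htk.2) hpiece) self_mem_Ici

end Concatenation

/-- The control obtained by applying the feedback law `κ` to the state `ξ` observed at the last
multiple of the sampling period `s`. -/
def sampledFeedback {E A : Type*} (κ : E → A) (s : ℝ) (ξ : ℝ → E) (t : ℝ) : A :=
  κ (ξ (⌊t / s⌋₊ * s))

lemma measurable_sampledFeedback {E A : Type*} [MeasurableSpace A] (κ : E → A) (s : ℝ)
    (ξ : ℝ → E) : Measurable (sampledFeedback κ s ξ) :=
  (measurable_from_top (f := fun k : ℕ => κ (ξ (k * s)))).comp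
    (Nat.measurable_floor.comp (measurable_id.div_const s))

/-- A trajectory in the differential sense: `ξ` starts at `x` and solves `ξ' = f (ξ, u)` for
right derivatives, which sampled-feedback curves do at every time, switching times included. -/
structure IsClassicalTrajectory {E A : Type*} [NormedAddCommGroup E] [NormedSpace ℝ E]
    [MeasurableSpace A] (f : E → A → E) (U : Set A) (x : E) (u : ℝ → A) (ξ : ℝ → E) : Prop where
  measurable_control : Measurable u
  control_mem : ∀ t, 0 ≤ t → u t ∈ U
  continuous : Continuous ξ
  apply_zero : ξ 0 = x
  hasDerivWithinAt : ∀ t, 0 ≤ t → HasDerivWithinAt ξ (f (ξ t) (u t)) (Ici t) t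

section Trajectories

variable {E A : Type*} [NormedAddCommGroup E] [NormedSpace ℝ E] [MeasurableSpace A]
  {f : E → A → E} {U : Set A} {K : NNReal}

lemma exists_sampledFeedback_trajectory [CompleteSpace E]
    (hlip : ∀ u ∈ U, LipschitzWith K (f · u)) {κ : E → A} (hκ : ∀ y, κ y ∈ U) {s : ℝ}
    (hs : 0 < s) (hsK : 2 * K * s ≤ 1) (x : E) :
    ∃ ξ, IsClassicalTrajectory f U x (sampledFeedback κ s ξ) ξ := by
  lift s to NNReal using hs.le
  choose Φ hΦ hΦ0 hΦ' using fun y =>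
    exists_integralCurve_of_lipschitzWith (hlip (κ y) (hκ y)) (by exact_mod_cast hsK) y
  refine ⟨concatFlow Φ s x, measurable_sampledFeedback _ _ _, fun _ _ => hκ _,
    continuous_concatFlow hs hΦ0 hΦ, ?_, fun t ht => ?_⟩
  · rw [concatFlow_of_nonpos hs le_rfl, hΦ0]
  · exact hasDerivWithinAt_concatFlow (v := fun y z => f z (κ y)) hs hΦ0 hΦ' ht

lemma IsClassicalTrajectory.exists_uniform_bounds (hlip : ∀ u ∈ U, LipschitzWith K (f · u))
    {C : ℝ} (hC : ∀ u ∈ U, ‖f 0 u‖ ≤ C) (x : E) (T : ℝ) :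
    ∃ (R : ℝ) (M : NNReal), ∀ u ξ, IsClassicalTrajectory f U x u ξ →
      (∀ t ∈ Icc 0 T, ‖ξ t‖ ≤ R) ∧ LipschitzOnWith M ξ (Icc 0 T) := by
  let R := gronwallBound ‖x‖ K |C| T
  refine ⟨R, (K * R + |C|).toNNReal, fun u ξ hξ => ?_⟩
  have hgrowth : ∀ t, 0 ≤ t → ‖f (ξ t) (u t)‖ ≤ K * ‖ξ t‖ + |C| := fun t ht => by
    have hu := hξ.control_mem t ht
    simpa only [sub_zero] using
      norm_le_of_lipschitzWith (hlip _ hu) 0 (ξ t) ((hC _ hu).trans (le_abs_self C))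
  have hR : ∀ t ∈ Icc 0 T, ‖ξ t‖ ≤ R := fun t ht => by
    have hgronwall := norm_le_gronwallBound_of_norm_deriv_right_le hξ.continuous.continuousOn
      (fun r hr => hξ.hasDerivWithinAt r hr.1) (congrArg norm hξ.apply_zero).le
      (fun r hr => hgrowth r hr.1) t ht
    rw [sub_zero] at hgronwall
    exact hgronwall.trans (gronwallBound_mono (norm_nonneg x) (abs_nonneg C) K.2 ht.2)
  refine ⟨hR, lipschitzOnWith_of_norm_deriv_right_le hξ.continuous.continuousOn
    (fun t ht => hξ.hasDerivWithinAt t ht.1) fun t ht => ?_⟩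
  refine ((hgrowth t ht.1).trans ?_).trans (Real.le_coe_toNNReal _)
  gcongr
  exact hR t ⟨ht.1, ht.2.le⟩

lemma norm_sub_sub_smul_le_of_lipschitzWith {v : E → E} (hv : LipschitzWith K v) {ξ : ℝ → E}
    {M : NNReal} {a s : ℝ} (hs : 0 ≤ s) (hM : LipschitzOnWith M ξ (Icc a (a + s)))
    (hξ : ∀ t ∈ Ico a (a + s), HasDerivWithinAt ξ (v (ξ t)) (Ici t) t) (z : E) :
    ‖ξ (a + s) - ξ a - s • v z‖ ≤ K * (M * s + ‖z - ξ a‖) * s := by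
  have hcont := hM.continuousOn
  have hlin : ∀ t, HasDerivWithinAt (fun r : ℝ => (r - a) • v z) (v z) (Ici t) t := fun t => by
    simpa only [one_smul] using (((hasDerivAt_id' t).sub_const a).smul_const (v z)).hasDerivWithinAt
  have hdrift := norm_image_sub_le_of_norm_deriv_right_le_segment
    (f := fun t => ξ t - (t - a) • v z) (f' := fun t => v (ξ t) - v z)
    (C := K * (M * s + ‖z - ξ a‖)) (by fun_prop)
    (fun t ht => (hξ t ht).sub (hlin t))
    (fun t ht => by
      refine (hv.norm_sub_le _ _).trans ?_
      gcongr
      have hmove : ‖ξ t - ξ a‖ ≤ M * s := by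
        refine (hM.norm_sub_le ⟨ht.1, ht.2.le⟩ ⟨le_rfl, by linarith⟩).trans ?_
        rw [Real.norm_of_nonneg (by linarith [ht.1])]
        gcongr
        linarith [ht.2]
      calc ‖ξ t - z‖ ≤ ‖ξ t - ξ a‖ + ‖ξ a - z‖ := norm_sub_le_norm_sub_add_norm_sub _ _ _
        _ ≤ M * s + ‖z - ξ a‖ := by rw [norm_sub_rev (ξ a)]; gcongr)
    (a + s) ⟨by linarith, le_rfl⟩
  simpa only [add_sub_cancel_left, sub_self, zero_smul, sub_zero, sub_right_comm] using hdrift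

end Trajectories

/-! ### Proximal aiming -/

section SupConvolution

variable {E : Type*} [NormedAddCommGroup E]

/-- The sup-convolution of `h` over `B` with the paraboloid `‖·‖ ^ 2 / (2 * ε)`: a Lyapunov-type
majorant of `h` on `B` that is semiconvex, hence has subgradients to steer along. -/
def supConvOn (h : E → ℝ) (B : Set E) (ε : ℝ) (y : E) : ℝ :=
  sSup ((fun z => h z - ‖z - y‖ ^ 2 / (2 * ε)) '' B)

/-- `z` attains the supremum defining `supConvOn h B ε y`. -/
structure IsProxPoint (h : E → ℝ) (B : Set E) (ε : ℝ) (y z : E) : Prop where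
  mem : z ∈ B
  supConvOn_eq : supConvOn h B ε y = h z - ‖z - y‖ ^ 2 / (2 * ε)

variable {h : E → ℝ} {B : Set E} {ε : ℝ} {y z : E}

lemma continuous_sub_sq_norm_div (hh : Continuous h) (ε : ℝ) (y : E) :
    Continuous fun z => h z - ‖z - y‖ ^ 2 / (2 * ε) := by
  fun_prop

lemma le_supConvOn (hB : IsCompact B) (hh : Continuous h) (hz : z ∈ B) :
    h z - ‖z - y‖ ^ 2 / (2 * ε) ≤ supConvOn h B ε y :=
  le_csSup (hB.image (continuous_sub_sq_norm_div hh ε y)).bddAbove (mem_image_of_mem _ hz)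

lemma le_supConvOn_self (hB : IsCompact B) (hh : Continuous h) (hy : y ∈ B) :
    h y ≤ supConvOn h B ε y := by
  simpa using le_supConvOn (y := y) (ε := ε) hB hh hy

lemma exists_isProxPoint (hB : IsCompact B) (hne : B.Nonempty) (hh : Continuous h) (ε : ℝ)
    (y : E) : ∃ z, IsProxPoint h B ε y z := by
  obtain ⟨z, hz, hsup, -⟩ :=
    hB.exists_sSup_image_eq_and_ge hne (continuous_sub_sq_norm_div hh ε y).continuousOn
  exact ⟨z, hz, hsup⟩

lemma IsProxPoint.supConvOn_le (hz : IsProxPoint h B ε y z) (hε : 0 < ε) :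
    supConvOn h B ε y ≤ h z := by
  rw [hz.supConvOn_eq]
  exact sub_le_self _ (by positivity)

lemma IsProxPoint.sq_norm_sub_le (hz : IsProxPoint h B ε y z) (hB : IsCompact B)
    (hh : Continuous h) (hε : 0 < ε) (hy : y ∈ B) : ‖z - y‖ ^ 2 ≤ (h z - h y) * (2 * ε) := by
  rw [← div_le_iff₀ (by positivity)]
  linarith [le_supConvOn_self (ε := ε) hB hh hy, hz.supConvOn_eq]

lemma IsProxPoint.isLocalMax (hz : IsProxPoint h B ε y z) (hB : IsCompact B) (hh : Continuous h)
    (hBz : B ∈ 𝓝 z) : IsLocalMax (fun w => h w - ‖w - y‖ ^ 2 / (2 * ε)) z := by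
  filter_upwards [hBz] with w hw
  exact (le_supConvOn hB hh hw).trans_eq hz.supConvOn_eq

lemma eventually_norm_sub_lt_of_isProxPoint (hB : IsCompact B) (hh : Continuous h) {δ : ℝ}
    (hδ : 0 < δ) : ∀ᶠ ε in 𝓝[>] (0 : ℝ), ∀ y ∈ B, ∀ z, IsProxPoint h B ε y z → ‖z - y‖ < δ := by
  obtain ⟨C, hC⟩ := hB.exists_bound_of_continuousOn hh.continuousOn
  filter_upwards [self_mem_nhdsWithin, eventually_const_mul_lt (4 * C) (sq_pos_of_pos hδ)]
    with ε (hε : 0 < ε) hCε y hy z hz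
  refine lt_of_pow_lt_pow_left₀ 2 hδ.le ?_
  have hosc : h z - h y ≤ 2 * C := by
    linarith [(abs_le.1 (hC z hz.mem)).2, (abs_le.1 (hC y hy)).1]
  calc ‖z - y‖ ^ 2 ≤ (h z - h y) * (2 * ε) := hz.sq_norm_sub_le hB hh hε hy
    _ ≤ 2 * C * (2 * ε) := by gcongr
    _ = 4 * C * ε := by ring
    _ < δ ^ 2 := hCε

end SupConvolution

section ProximalAiming

variable {E A : Type*} [NormedAddCommGroup E] [InnerProductSpace ℝ E]
  {f : E → A → E} {U : Set A} {h : E → ℝ} {B D : Set E} {K M : NNReal} {ε ω : ℝ}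

/-- The barrier condition with zero class `K` term, tested only against the paraboloids
`w ↦ ‖w - y‖ ^ 2 / (2 * ε)` that touch `h` from above. -/
def IsProximalCBF (f : E → A → E) (U : Set A) (h : E → ℝ) : Prop :=
  ∀ z, 0 < h z → ∀ (y : E) (ε : ℝ), 0 < ε →
    IsLocalMax (fun w => h w - ‖w - y‖ ^ 2 / (2 * ε)) z → ∃ u ∈ U, 0 ≤ inner ℝ (z - y) (f z u)

/-- At the state `y`, the control `u` does not push away from some prox point of `y` that is close
to `y` and at which `h` exceeds `h y` by at most `ω`. -/
def IsAimingControl (f : E → A → E) (h : E → ℝ) (B : Set E) (ε ω : ℝ) (y : E) (u : A) : Prop :=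
  ∃ z, IsProxPoint h B ε y z ∧ ‖z - y‖ ≤ 1 ∧ h z ≤ h y + ω ∧ 0 ≤ inner ℝ (z - y) (f z u)

lemma IsAimingControl.supConvOn_le {y : E} {u : A} (hu : IsAimingControl f h B ε ω y u)
    (hε : 0 < ε) : supConvOn h B ε y ≤ h y + ω := by
  obtain ⟨z, hz, -, hzω, -⟩ := hu
  exact (hz.supConvOn_le hε).trans hzω

lemma exists_aimingFeedback (hprox : IsProximalCBF f U h) (hU : U.Nonempty) (hh : Continuous h)
    (hB : IsCompact B) (hDB : ∀ y ∈ D, Metric.closedBall y 1 ⊆ B) (hω : 0 < ω) :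
    ∃ ε > 0, ∃ κ : E → A, (∀ y, κ y ∈ U) ∧
      ∀ y ∈ D, 0 < supConvOn h B ε y → IsAimingControl f h B ε ω y (κ y) := by
  obtain ⟨δ, hδ, hunif⟩ :=
    Metric.uniformContinuousOn_iff.1 (hB.uniformContinuousOn_of_continuous hh.continuousOn) ω hω
  obtain ⟨ε, hclose, hε⟩ :=
    ((eventually_norm_sub_lt_of_isProxPoint hB hh (lt_min one_pos hδ)).and
      self_mem_nhdsWithin).exists
  have hpoint : ∀ y, ∃ u ∈ U,
      y ∈ D → 0 < supConvOn h B ε y → IsAimingControl f h B ε ω y u := by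
    intro y
    by_cases hy : y ∈ D ∧ 0 < supConvOn h B ε y
    swap
    · exact hU.imp fun u hu => ⟨hu, fun hyD hpos => absurd ⟨hyD, hpos⟩ hy⟩
    have hyB : y ∈ B := hDB y hy.1 (Metric.mem_closedBall_self zero_le_one)
    obtain ⟨z, hz⟩ := exists_isProxPoint hB ⟨y, hyB⟩ hh ε y
    obtain ⟨hz1, hzδ⟩ := lt_min_iff.1 (hclose y hyB z hz)
    have hBz : B ∈ 𝓝 z :=
      mem_of_superset (Metric.closedBall_mem_nhds_of_mem (mem_ball_iff_norm.2 hz1)) (hDB y hy.1)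
    obtain ⟨u, hu, hinner⟩ :=
      hprox z (hy.2.trans_le (hz.supConvOn_le hε)) y ε hε (hz.isLocalMax hB hh hBz)
    have hhz := hunif z hz.mem y hyB (by rwa [dist_eq_norm])
    rw [Real.dist_eq] at hhz
    exact ⟨u, hu, fun _ _ => ⟨z, hz, hz1.le, by linarith [le_abs_self (h z - h y)], hinner⟩⟩
  choose κ hκU hκ using hpoint
  exact ⟨ε, hε, κ, hκU, hκ⟩

lemma sq_norm_sub_le_of_inner_nonneg {p v d : E} {s b : ℝ} (hpv : 0 ≤ inner ℝ p v) (hs : 0 ≤ s)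
    (hb : ‖d - s • v‖ ≤ b) : ‖p - d‖ ^ 2 ≤ ‖p‖ ^ 2 + 2 * (‖p‖ * b) + ‖d‖ ^ 2 := by
  have hsplit : inner ℝ p d = s * inner ℝ p v + inner ℝ p (d - s • v) := by
    rw [inner_sub_right, real_inner_smul_right]
    ring
  have herr : -(‖p‖ * b) ≤ inner ℝ p (d - s • v) :=
    (neg_le_neg (by gcongr)).trans (neg_le_of_abs_le (abs_real_inner_le_norm _ _))
  rw [norm_sub_sq_real]
  linarith [mul_nonneg hs hpv]

/- The prox point `z` of `ξ a` competes in the supremum at `ξ (a + s)`. By aiming, moving from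
`ξ a` to `ξ (a + s)` increases the squared distance to `z` only by the error of replacing `f (ξ t)`
by `f z`, and there `‖z - ξ a‖ ^ 2 / (2 * ε)` is controlled by `h z - h (ξ a) ≤ ω`. -/
lemma IsAimingControl.supConvOn_sub_le {ξ : ℝ → E} {a s : ℝ} {u : A}
    (hu : IsAimingControl f h B ε ω (ξ a) u) (hB : IsCompact B) (hh : Continuous h) (hε : 0 < ε)
    (hξB : ξ a ∈ B) (hs : 0 ≤ s) (hlip : LipschitzWith K (f · u))
    (hM : LipschitzOnWith M ξ (Icc a (a + s)))
    (hξ : ∀ t ∈ Ico a (a + s), HasDerivWithinAt ξ (f (ξ t) u) (Ici t) t) :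
    supConvOn h B ε (ξ a) - s * (2 * K * ω + (2 * K * M + M ^ 2) / (2 * ε) * s) ≤
      supConvOn h B ε (ξ (a + s)) := by
  obtain ⟨z, hz, hz1, hzω, hinner⟩ := hu
  set r := ‖z - ξ a‖
  have hstep : ‖ξ (a + s) - ξ a‖ ≤ M * s := by
    simpa [abs_of_nonneg hs] using
      hM.norm_sub_le ⟨by linarith, le_rfl⟩ (⟨le_rfl, by linarith⟩ : a ∈ Icc a (a + s))
  have hgrow : ‖z - ξ (a + s)‖ ^ 2 ≤ r ^ 2 + 2 * (r * (K * (M * s + r) * s)) + (M * s) ^ 2 := by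
    rw [← sub_sub_sub_cancel_right z (ξ (a + s)) (ξ a)]
    refine (sq_norm_sub_le_of_inner_nonneg hinner hs
      (norm_sub_sub_smul_le_of_lipschitzWith hlip hs hM hξ z)).trans ?_
    gcongr
  have hr : r ^ 2 / (2 * ε) ≤ ω := by
    rw [div_le_iff₀ (by positivity)]
    refine (hz.sq_norm_sub_le hB hh hε hξB).trans ?_
    gcongr
    linarith
  have hsum : ‖z - ξ (a + s)‖ ^ 2 / (2 * ε) ≤
      r ^ 2 / (2 * ε) + s * (2 * K * ω + (2 * K * M + M ^ 2) / (2 * ε) * s) :=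
    calc ‖z - ξ (a + s)‖ ^ 2 / (2 * ε)
        ≤ (r ^ 2 + 2 * (r * (K * (M * s + r) * s)) + (M * s) ^ 2) / (2 * ε) := by gcongr
      _ = r ^ 2 / (2 * ε) +
          s * (2 * K * (r ^ 2 / (2 * ε)) + (2 * K * M * r + M ^ 2) / (2 * ε) * s) := by ring
      _ ≤ r ^ 2 / (2 * ε) +
          s * (2 * K * ω + (2 * K * M * 1 + M ^ 2) / (2 * ε) * s) := by gcongr
      _ = _ := by rw [mul_one]
  linarith [le_supConvOn (y := ξ (a + s)) (ε := ε) hB hh hz.mem, hz.supConvOn_eq]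

variable [MeasurableSpace A]

lemma IsClassicalTrajectory.sub_le_supConvOn_of_aimingFeedback {κ : E → A} {x : E} {ξ : ℝ → E}
    {s T l : ℝ} (hξ : IsClassicalTrajectory f U x (sampledFeedback κ s ξ) ξ) (hs : 0 < s)
    (hlip : ∀ u ∈ U, LipschitzWith K (f · u)) (hB : IsCompact B) (hh : Continuous h) (hε : 0 < ε)
    (hξB : ∀ t ∈ Icc 0 T, ξ t ∈ B) (hM : LipschitzOnWith M ξ (Icc 0 T))
    (hκ : ∀ t ∈ Icc 0 T, 0 < supConvOn h B ε (ξ t) → IsAimingControl f h B ε ω (ξ t) (κ (ξ t)))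
    (hl : 2 * K * ω + (2 * K * M + M ^ 2) / (2 * ε) * s ≤ l) (hl0 : 0 ≤ l) (hTl : T * l < h x)
    (k : ℕ) (hkT : k * s ≤ T) : h x - k * s * l ≤ supConvOn h B ε (ξ (k * s)) := by
  induction k with
  | zero =>
    have hx : h (ξ 0) ≤ supConvOn h B ε (ξ 0) :=
      le_supConvOn_self hB hh (hξB 0 ⟨le_rfl, by simpa using hkT⟩)
    rw [hξ.apply_zero] at hx
    simpa [hξ.apply_zero] using hx
  | succ k ih =>
    rw [Nat.cast_succ, add_one_mul] at hkT ⊢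
    have hk0 : 0 ≤ k * s := by positivity
    have hk : (k : ℝ) * s ∈ Icc 0 T := ⟨hk0, by linarith⟩
    have hpast := ih hk.2
    have hpos : 0 < supConvOn h B ε (ξ (k * s)) := by
      have : k * s * l ≤ T * l := by gcongr; exact hk.2
      linarith
    have hhold : ∀ t ∈ Ico (k * s) (k * s + s),
        HasDerivWithinAt ξ (f (ξ t) (κ (ξ (k * s)))) (Ici t) t := by
      intro t ht
      have hderiv := hξ.hasDerivWithinAt t (hk0.trans ht.1)
      rwa [sampledFeedback, natFloor_div_eq_of_mem_Ico hs (by rwa [add_one_mul])] at hderiv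
    have hκU : κ (ξ (k * s)) ∈ U := by
      have hmem := hξ.control_mem (k * s) hk0
      rwa [sampledFeedback, natFloor_div_eq_of_mem_Ico hs (left_mem_sampleInterval hs k)] at hmem
    have hstep := (hκ _ hk hpos).supConvOn_sub_le hB hh hε (hξB _ hk) hs.le (hlip _ hκU)
      (hM.mono (Icc_subset_Icc hk0 hkT)) hhold
    have : s * (2 * K * ω + (2 * K * M + M ^ 2) / (2 * ε) * s) ≤ s * l := by gcongr
    linarith

lemma IsClassicalTrajectory.sub_le_of_aimingFeedback {κ : E → A} {x : E} {ξ : ℝ → E}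
    {s T l δ : ℝ} (hξ : IsClassicalTrajectory f U x (sampledFeedback κ s ξ) ξ) (hs : 0 < s)
    (hlip : ∀ u ∈ U, LipschitzWith K (f · u)) (hB : IsCompact B) (hh : Continuous h) (hε : 0 < ε)
    (hξB : ∀ t ∈ Icc 0 T, ξ t ∈ B) (hM : LipschitzOnWith M ξ (Icc 0 T))
    (hκ : ∀ t ∈ Icc 0 T, 0 < supConvOn h B ε (ξ t) → IsAimingControl f h B ε ω (ξ t) (κ (ξ t)))
    (hl : 2 * K * ω + (2 * K * M + M ^ 2) / (2 * ε) * s ≤ l) (hl0 : 0 ≤ l) (hTl : T * l < h x)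
    (hunif : ∀ y ∈ B, ∀ z ∈ B, dist y z < δ → dist (h y) (h z) < ω) (hMs : M * s < δ) :
    ∀ t ∈ Icc 0 T, h x - T * l - 2 * ω ≤ h (ξ t) := by
  intro t ht
  set k := ⌊t / s⌋₊
  obtain ⟨hkt, htk⟩ : t ∈ Ico (k * s) ((k + 1) * s) := mem_Ico_natFloor_div_mul hs ht.1
  have hk : k * s ∈ Icc 0 T := ⟨by positivity, hkt.trans ht.2⟩
  have hsup := hξ.sub_le_supConvOn_of_aimingFeedback hs hlip hB hh hε hξB hM hκ hl hl0 hTl k hk.2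
  have hkl : k * s * l ≤ T * l := by gcongr; exact hk.2
  have hsample := (hκ _ hk (by linarith)).supConvOn_le hε
  have hnear : dist (ξ (k * s)) (ξ t) < δ := by
    refine lt_of_le_of_lt ((hM.dist_le_mul _ hk _ ht).trans ?_) hMs
    rw [dist_comm, Real.dist_eq, abs_of_nonneg (by linarith)]
    gcongr
    linarith
  have hhold := hunif _ (hξB _ hk) _ (hξB t ht) hnear
  rw [Real.dist_eq] at hhold
  linarith [le_abs_self (h (ξ (k * s)) - h (ξ t))]

theorem IsProximalCBF.exists_trajectory_le [ProperSpace E] (hprox : IsProximalCBF f U h)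
    (hU : U.Nonempty) (hh : Continuous h) (hlip : ∀ u ∈ U, LipschitzWith K (f · u)) {C : ℝ}
    (hC : ∀ u ∈ U, ‖f 0 u‖ ≤ C) {x : E} {c : ℝ} (hc : 0 ≤ c) (hcx : c < h x) (T : ℝ) :
    ∃ u ξ, IsClassicalTrajectory f U x u ξ ∧ ∀ t ∈ Icc 0 T, c ≤ h (ξ t) := by
  obtain ⟨R, M, hbounds⟩ := IsClassicalTrajectory.exists_uniform_bounds hlip hC x T
  have hB : IsCompact (Metric.closedBall (0 : E) (R + 1)) := isCompact_closedBall _ _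
  have hDB : ∀ y ∈ Metric.closedBall (0 : E) R,
      Metric.closedBall y 1 ⊆ Metric.closedBall 0 (R + 1) := fun y hy =>
    Metric.closedBall_subset_closedBall' (by linarith [Metric.mem_closedBall.1 hy])
  have hgap : 0 < (h x - c) / 2 := by linarith
  obtain ⟨ω, hω, hωpos : 0 < ω⟩ := ((eventually_const_mul_lt (T * (2 * K) + 2) hgap).and
    self_mem_nhdsWithin).exists
  obtain ⟨δ, hδ, hunif⟩ := Metric.uniformContinuousOn_iff.1
    (hB.uniformContinuousOn_of_continuous hh.continuousOn) ω hωpos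
  obtain ⟨ε, hε, κ, hκU, hκ⟩ := exists_aimingFeedback hprox hU hh hB hDB hωpos
  obtain ⟨s, ⟨⟨hsK, hMs⟩, hserr⟩, hs : 0 < s⟩ :=
    (((eventually_const_mul_lt (2 * K : ℝ) one_pos).and (eventually_const_mul_lt M hδ)).and
      (eventually_const_mul_lt (T * ((2 * K * M + M ^ 2) / (2 * ε))) hgap)).and
      self_mem_nhdsWithin |>.exists
  obtain ⟨ξ, hξ⟩ := exists_sampledFeedback_trajectory hlip hκU hs hsK.le x
  obtain ⟨hξR, hM⟩ := hbounds _ ξ hξ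
  have hξD : ∀ t ∈ Icc 0 T, ξ t ∈ Metric.closedBall (0 : E) R := fun t ht =>
    mem_closedBall_zero_iff.2 (hξR t ht)
  refine ⟨_, ξ, hξ, fun t ht => le_trans ?_ <| hξ.sub_le_of_aimingFeedback hs hlip hB hh hε
    (fun t ht => hDB _ (hξD t ht) (Metric.mem_closedBall_self zero_le_one)) hM
    (fun t ht => hκ _ (hξD t ht)) le_rfl (by positivity) ?_ hunif hMs t ht⟩ <;> linarith

end ProximalAiming

/-! ### Integral trajectories and viscosity test functions -/

section Integrability

variable {E A : Type*} [NormedAddCommGroup E] [MeasurableSpace E] [BorelSpace E]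
  [SecondCountableTopology E] [TopologicalSpace A] [T2Space A] [MeasurableSpace A] [BorelSpace A]
  {f : E → A → E} {U : Set A} {K : NNReal}

lemma intervalIntegrable_dynamics (hU : IsCompact U) (hcont : ∀ x, ContinuousOn (f x) U)
    (hlip : ∀ u ∈ U, LipschitzWith K (f · u)) {u : ℝ → A} (hu : Measurable u)
    (huU : ∀ t, 0 ≤ t → u t ∈ U) {ξ : ℝ → E} (hξ : Continuous ξ) {t : ℝ} (ht : 0 ≤ t) :
    IntervalIntegrable (fun r => f (ξ r) (u r)) volume 0 t := by
  classical
  have hf : ContinuousOn (Function.uncurry f) (univ ×ˢ U) :=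
    continuousOn_prod_of_continuousOn_lipschitzOnWith _ K (fun x _ => hcont x)
      fun u hu => (hlip u hu).lipschitzOnWith
  have hmem : ∀ r ∈ Icc 0 t, (ξ r, u r) ∈ (univ ×ˢ U : Set (E × A)) := fun r hr =>
    ⟨mem_univ _, huU r hr.1⟩
  have hmeas : Measurable fun r => (univ ×ˢ U).piecewise (Function.uncurry f) 0 (ξ r, u r) :=
    (hf.measurable_piecewise continuousOn_const
      (MeasurableSet.univ.prod hU.measurableSet)).comp (hξ.measurable.prodMk hu)
  obtain ⟨C, hC⟩ := ((isCompact_Icc (a := 0) (b := t)).image hξ |>.prod hU)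
    |>.exists_bound_of_continuousOn (hf.mono (prod_mono_left (subset_univ _)))
  rw [intervalIntegrable_iff_integrableOn_Icc_of_le ht]
  refine IntegrableOn.congr_fun (f := fun r => (univ ×ˢ U).piecewise (Function.uncurry f) 0
    (ξ r, u r)) ?_ (fun r hr => piecewise_eq_of_mem _ _ _ (hmem r hr)) measurableSet_Icc
  refine Measure.integrableOn_of_bounded (M := C) (by simp) hmeas.aestronglyMeasurable ?_
  refine (ae_restrict_iff' measurableSet_Icc).2 (Eventually.of_forall fun r hr => ?_)
  rw [piecewise_eq_of_mem _ _ _ (hmem r hr)]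
  exact hC (ξ r, u r) ⟨mem_image_of_mem _ hr, huU r hr.1⟩

end Integrability

section Conjugation

variable {E F A : Type*} [NormedAddCommGroup E] [NormedSpace ℝ E] [NormedAddCommGroup F]
  [NormedSpace ℝ F] {f : F → A → F} {U : Set A}

/-- The dynamics `f` read in the coordinates given by `e`. It moves the problem from the sup norm
of `Fin n → ℝ` to an inner product space. -/
def conjDynamics (e : E ≃L[ℝ] F) (f : F → A → F) (y : E) (u : A) : E :=
  e.symm (f (e y) u)

lemma lipschitzWith_conjDynamics (e : E ≃L[ℝ] F) {K : NNReal} {u : A}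
    (hlip : LipschitzWith K (f · u)) :
    LipschitzWith (‖(e.symm : F →L[ℝ] E)‖₊ * (K * ‖(e : E →L[ℝ] F)‖₊)) (conjDynamics e f · u) :=
  e.symm.lipschitz.comp (hlip.comp e.lipschitz)

lemma IsClassicalTrajectory.of_conjDynamics [MeasurableSpace A] {e : E ≃L[ℝ] F} {x : E}
    {u : ℝ → A} {ξ : ℝ → E} (hξ : IsClassicalTrajectory (conjDynamics e f) U x u ξ) :
    IsClassicalTrajectory f U (e x) u (e ∘ ξ) where
  measurable_control := hξ.measurable_control
  control_mem := hξ.control_mem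
  continuous := e.continuous.comp hξ.continuous
  apply_zero := congrArg e hξ.apply_zero
  hasDerivWithinAt t ht := by
    simpa [conjDynamics] using
      (e : E →L[ℝ] F).hasFDerivAt.comp_hasDerivWithinAt t (hξ.hasDerivWithinAt t ht)

end Conjugation

section AvoidProblem

variable {n m : ℕ} {f : (Fin n → ℝ) → (Fin m → ℝ) → Fin n → ℝ} {U : Set (Fin m → ℝ)}
  {h : (Fin n → ℝ) → ℝ} {K : NNReal} {x : Fin n → ℝ} {u : ℝ → Fin m → ℝ} {ξ : ℝ → Fin n → ℝ}

lemma IsClassicalTrajectory.isTrajectory (hξ : IsClassicalTrajectory f U x u ξ)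
    (hU : IsCompact U) (hcont : ∀ x, ContinuousOn (f x) U)
    (hlip : ∀ u ∈ U, LipschitzWith K (f · u)) : IsTrajectory f x u ξ := by
  refine ⟨hξ.continuous, fun t ht => ?_⟩
  rw [intervalIntegral.integral_eq_sub_of_hasDeriv_right_of_le ht hξ.continuous.continuousOn
    (fun r hr => (hξ.hasDerivWithinAt r hr.1.le).mono Ioi_subset_Ici_self)
    (intervalIntegrable_dynamics hU hcont hlip hξ.measurable_control hξ.control_mem
      hξ.continuous ht), hξ.apply_zero, add_sub_cancel]

lemma isLocallyLipschitzClassK_const_mul {c : ℝ} (hc : 0 < c) :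
    IsLocallyLipschitzClassK fun r => c * r := by
  refine ⟨⟨by fun_prop, fun a _ b _ hab => mul_lt_mul_of_pos_left hab hc, mul_zero c⟩,
    fun r _ => ⟨c.toNNReal, univ, univ_mem, ?_⟩⟩
  refine LipschitzOnWith.of_dist_le_mul fun a _ b _ => ?_
  rw [Real.dist_eq, Real.dist_eq, ← mul_sub, abs_mul, abs_of_pos hc, Real.coe_toNNReal _ hc.le]

lemma IsClassK.pos {α : ℝ → ℝ} (hα : IsClassK α) {r : ℝ} (hr : 0 < r) : 0 < α r := by
  simpa only [hα.2.2] using hα.2.1 self_mem_Ici (mem_Ici.2 hr.le) hr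

lemma forall_isViscosityCBF_iff :
    (∀ α, IsLocallyLipschitzClassK α → IsViscosityCBF f U α h) ↔ IsViscosityCBF f U 0 h := by
  constructor
  · intro H
    refine ⟨(H _ (isLocallyLipschitzClassK_const_mul one_pos)).1, fun x hx φ hφ hmax => ?_⟩
    rw [Pi.zero_apply, neg_zero]
    refine le_of_forall_pos_le_add fun e he => ?_
    have hslack := (H _ (isLocallyLipschitzClassK_const_mul (div_pos he hx))).2 x hx φ hφ hmax
    simp only [div_mul_cancel₀ e hx.ne'] at hslack
    linarith
  · refine fun H α hα => ⟨H.1, fun x hx φ hφ hmax => le_trans ?_ (H.2 x hx φ hφ hmax)⟩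
    exact neg_le_neg (hα.1.pos hx).le

lemma IsViscosityCBF.exists_control (hcbf : IsViscosityCBF f U 0 h) (hU : IsCompact U)
    (hUne : U.Nonempty) (hcont : ContinuousOn (f x) U) (hx : 0 < h x)
    {φ : (Fin n → ℝ) → ℝ} (hφ : ContDiff ℝ 1 φ) (hmax : IsLocalMax (fun y => h y - φ y) x) :
    ∃ u ∈ U, 0 ≤ fderiv ℝ φ x (f x u) := by
  obtain ⟨u, hu, hsup, -⟩ := hU.exists_sSup_image_eq_and_ge hUne
    ((fderiv ℝ φ x).continuous.comp_continuousOn hcont)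
  have hsup_nonneg := hcbf.2 x hx φ hφ hmax
  rw [Pi.zero_apply, neg_zero] at hsup_nonneg
  exact ⟨u, hu, hsup_nonneg.trans_eq hsup⟩

lemma IsViscosityCBF.isProximalCBF {E : Type*} [NormedAddCommGroup E] [InnerProductSpace ℝ E]
    (hcbf : IsViscosityCBF f U 0 h) (hU : IsCompact U) (hUne : U.Nonempty)
    (hcont : ∀ x, ContinuousOn (f x) U) (e : E ≃L[ℝ] (Fin n → ℝ)) :
    IsProximalCBF (conjDynamics e f) U (h ∘ e) := by
  intro z hz y ε hε hmax
  let φ : (Fin n → ℝ) → ℝ := fun w => ‖e.symm w - y‖ ^ 2 / (2 * ε)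
  have hφ : ContDiff ℝ 1 φ := (e.symm.contDiff.sub contDiff_const).norm_sq ℝ |>.div_const _
  have hφmax : IsLocalMax (fun w => h w - φ w) (e z) := by
    have hmax' : IsLocalMax (fun w => (h ∘ e) w - ‖w - y‖ ^ 2 / (2 * ε)) (e.symm (e z)) := by
      rwa [e.symm_apply_apply]
    simpa [φ, Function.comp_def] using
      hmax'.comp_continuous e.symm.continuous.continuousAt
  obtain ⟨u, hu, hdir⟩ := hcbf.exists_control hU hUne (hcont (e z)) hz hφ hφmax
  have hderiv : HasFDerivAt φ _ (e z) :=
    ((e.symm.hasFDerivAt (x := e z)).sub_const y).norm_sq.mul_const (2 * ε)⁻¹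
  have hgrad : fderiv ℝ φ (e z) (f (e z) u) = ε⁻¹ * inner ℝ (z - y) (conjDynamics e f z u) := by
    rw [hderiv.fderiv]
    simp only [ContinuousLinearEquiv.symm_apply_apply, mul_inv_rev, smul_apply,
      ContinuousLinearMap.comp_apply, ContinuousLinearEquiv.coe_coe, innerSL_apply_apply,
      smul_eq_mul, nsmul_eq_mul, conjDynamics]
    push_cast
    ring
  rw [hgrad] at hdir
  exact ⟨u, hu, (mul_nonneg_iff_of_pos_left (inv_pos.2 hε)).1 hdir⟩

/-! ### Necessity: first-order decay of the barrier -/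

lemma IsTrajectory.apply_zero (hξ : IsTrajectory f x u ξ) : ξ 0 = x := by
  simpa using hξ.2 0 le_rfl

lemma IsTrajectory.norm_sub_le (hξ : IsTrajectory f x u ξ) (hu : IsControl U u)
    (hlip : ∀ u ∈ U, LipschitzWith K (f · u)) {C : ℝ} (hC : ∀ u ∈ U, ‖f x u‖ ≤ C) {t : ℝ}
    (ht : 0 ≤ t) (htK : 2 * K * t ≤ 1) : ‖ξ t - x‖ ≤ 2 * C * t := by
  obtain ⟨τ, hτ, hmax⟩ := isCompact_Icc.exists_isMaxOn (nonempty_Icc.2 ht)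
    (f := fun t => ‖ξ t - x‖) (hξ.1.sub continuous_const).norm.continuousOn
  set ρ := ‖ξ τ - x‖
  have hC0 : 0 ≤ C := (norm_nonneg _).trans (hC _ (hu.2 0 le_rfl))
  have hspeed : ρ ≤ (K * ρ + C) * |τ - 0| := by
    have hint : ξ τ - x = ∫ s in (0 : ℝ)..τ, f (ξ s) (u s) := by
      rw [hξ.2 τ hτ.1, add_sub_cancel_left]
    rw [show ρ = ‖ξ τ - x‖ from rfl, hint]
    refine intervalIntegral.norm_integral_le_of_norm_le_const fun s hs => ?_
    rw [uIoc_of_le hτ.1] at hs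
    have hsu := hu.2 s hs.1.le
    refine (norm_le_of_lipschitzWith (hlip _ hsu) x (ξ s) (hC _ hsu)).trans ?_
    gcongr
    exact hint ▸ hmax ⟨hs.1.le, hs.2.trans hτ.2⟩
  have hhalf : 2 * K * t * ρ ≤ 1 * ρ := by gcongr
  have htotal : (K * ρ + C) * |τ - 0| ≤ (K * ρ + C) * t := by
    rw [sub_zero, abs_of_nonneg hτ.1]
    gcongr
    exact hτ.2
  have htρ : ‖ξ t - x‖ ≤ ρ := hmax ⟨ht, le_rfl⟩
  linarith

lemma IsTrajectory.apply_sub_le (hξ : IsTrajectory f x u ξ) (hu : IsControl U u)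
    (hU : IsCompact U) (hcont : ∀ x, ContinuousOn (f x) U)
    (hlip : ∀ u ∈ U, LipschitzWith K (f · u)) {C : ℝ} (hC : ∀ u ∈ U, ‖f x u‖ ≤ C) {t : ℝ}
    (ht : 0 ≤ t) (htK : 2 * K * t ≤ 1) (L : (Fin n → ℝ) →L[ℝ] ℝ) {c : ℝ}
    (hL : ∀ u ∈ U, L (f x u) ≤ c) : L (ξ t - x) ≤ (‖L‖ * (K * (2 * C * t)) + c) * t := by
  have hC0 : 0 ≤ C := (norm_nonneg _).trans (hC _ (hu.2 0 le_rfl))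
  have hint := intervalIntegrable_dynamics hU hcont hlip hu.1 hu.2 hξ.1 ht
  have hbound : ∀ s ∈ Icc 0 t, L (f (ξ s) (u s)) ≤ ‖L‖ * (K * (2 * C * t)) + c := by
    intro s hs
    have hsu := hu.2 s hs.1
    have hstate : ‖ξ s - x‖ ≤ 2 * C * t := by
      refine (hξ.norm_sub_le hu hlip hC hs.1 (le_trans ?_ htK)).trans ?_ <;> gcongr <;> exact hs.2
    have hdiff : L (f (ξ s) (u s) - f x (u s)) ≤ ‖L‖ * (K * (2 * C * t)) := by
      refine (le_abs_self _).trans ((L.le_opNorm _).trans ?_)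
      gcongr
      exact ((hlip _ hsu).norm_sub_le (ξ s) x).trans (by gcongr)
    rw [map_sub] at hdiff
    linarith [hL _ hsu]
  calc L (ξ t - x) = ∫ s in (0 : ℝ)..t, L (f (ξ s) (u s)) := by
        rw [L.intervalIntegral_comp_comm hint, hξ.2 t ht, add_sub_cancel_left]
    _ ≤ ∫ _ in (0 : ℝ)..t, (‖L‖ * (K * (2 * C * t)) + c) :=
        intervalIntegral.integral_mono_on ht
          ⟨L.integrable_comp hint.1, L.integrable_comp hint.2⟩ (by simp) hbound
    _ = (‖L‖ * (K * (2 * C * t)) + c) * t := by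
        rw [intervalIntegral.integral_const, sub_zero, smul_eq_mul, mul_comm]

lemma eventually_forall_isTrajectory (hlip : ∀ u ∈ U, LipschitzWith K (f · u)) {C : ℝ}
    (hC : ∀ u ∈ U, ‖f x u‖ ≤ C) {p : (Fin n → ℝ) → Prop} (hp : ∀ᶠ y in 𝓝 x, p y) :
    ∀ᶠ t in 𝓝[>] (0 : ℝ), ∀ u ξ, IsControl U u → IsTrajectory f x u ξ → p (ξ t) := by
  obtain ⟨r, hr, hball⟩ := Metric.eventually_nhds_iff.1 hp
  filter_upwards [self_mem_nhdsWithin, eventually_const_mul_lt (2 * K : ℝ) one_pos,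
    eventually_const_mul_lt (2 * C) hr] with t (ht : 0 < t) htK htr u ξ hu hξ
  refine hball (lt_of_le_of_lt ?_ htr)
  rw [dist_eq_norm]
  exact hξ.norm_sub_le hu hlip hC ht.le htK.le

lemma eventually_forall_isTrajectory_apply_le (hU : IsCompact U)
    (hcont : ∀ x, ContinuousOn (f x) U) (hlip : ∀ u ∈ U, LipschitzWith K (f · u))
    {φ : (Fin n → ℝ) → ℝ} (hφ : DifferentiableAt ℝ φ x)
    (hmax : IsLocalMax (fun y => h y - φ y) x) {δ : ℝ} (hδ : 0 < δ)
    (hdecay : ∀ u ∈ U, fderiv ℝ φ x (f x u) ≤ -δ) :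
    ∀ᶠ t in 𝓝[>] (0 : ℝ), ∀ u ξ, IsControl U u → IsTrajectory f x u ξ →
      h (ξ t) ≤ h x - δ / 2 * t := by
  obtain ⟨C, hC0, hC⟩ :=
    (hU.image_of_continuousOn (hcont x)).isBounded.exists_pos_norm_le
  rw [forall_mem_image] at hC
  set L := fderiv ℝ φ x
  have htaylor : ∀ᶠ y in 𝓝 x, ‖φ y - φ x - L (y - x)‖ ≤ δ / (8 * C) * ‖y - x‖ :=
    hφ.hasFDerivAt.isLittleO.def (by positivity)
  filter_upwards [self_mem_nhdsWithin, eventually_const_mul_lt (2 * K : ℝ) one_pos,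
    eventually_const_mul_lt (‖L‖ * (K * (2 * C))) (by positivity : 0 < δ / 4),
    eventually_forall_isTrajectory hlip hC (htaylor.and hmax)]
    with t (ht : 0 < t) htK hLt hlocal u ξ hu hξ
  obtain ⟨hφξ, hhξ⟩ := hlocal u ξ hu hξ
  have hremainder : φ (ξ t) - φ x - L (ξ t - x) ≤ δ / 4 * t :=
    calc φ (ξ t) - φ x - L (ξ t - x) ≤ δ / (8 * C) * ‖ξ t - x‖ := (le_abs_self _).trans hφξ
      _ ≤ δ / (8 * C) * (2 * C * t) := by
        gcongr
        exact hξ.norm_sub_le hu hlip hC ht.le htK.le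
      _ = δ / 4 * t := by field_simp; norm_num
  have hlinear : L (ξ t - x) ≤ (δ / 4 + -δ) * t := by
    refine (hξ.apply_sub_le hu hU hcont hlip hC ht.le htK.le L hdecay).trans ?_
    gcongr
    linarith
  linarith

/-! ### The avoid value function -/

/-- The avoid value function `V (x, T)`. Like every real `sSup`, it is `0` if there is no admissible
trajectory from `x`. -/
def avoidValue (f : (Fin n → ℝ) → (Fin m → ℝ) → Fin n → ℝ) (U : Set (Fin m → ℝ))
    (h : (Fin n → ℝ) → ℝ) (x : Fin n → ℝ) (T : ℝ) : ℝ :=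
  sSup {y : ℝ | ∃ u ξ, IsControl U u ∧ IsTrajectory f x u ξ ∧
    y = sInf ((fun t => h (ξ t)) '' Icc 0 T)}

lemma sInf_image_Icc_le (hh0 : ∀ x, 0 ≤ h x) {t T : ℝ} (ht : t ∈ Icc 0 T) :
    sInf ((fun t => h (ξ t)) '' Icc 0 T) ≤ h (ξ t) :=
  csInf_le ⟨0, forall_mem_image.2 fun _ _ => hh0 _⟩ (mem_image_of_mem _ ht)

lemma avoidValue_le_of_forall (hh0 : ∀ x, 0 ≤ h x) {T c : ℝ} (hc : 0 ≤ c)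
    (H : ∀ u ξ, IsControl U u → IsTrajectory f x u ξ → ∃ t ∈ Icc 0 T, h (ξ t) ≤ c) :
    avoidValue f U h x T ≤ c := by
  refine Real.sSup_le ?_ hc
  rintro _ ⟨u, ξ, hu, hξ, rfl⟩
  obtain ⟨t, ht, htc⟩ := H u ξ hu hξ
  exact (sInf_image_Icc_le hh0 ht).trans htc

lemma avoidValue_le (hh0 : ∀ x, 0 ≤ h x) {T : ℝ} (hT : 0 ≤ T) : avoidValue f U h x T ≤ h x :=
  avoidValue_le_of_forall hh0 (hh0 x) fun _ _ _ hξ =>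
    ⟨0, left_mem_Icc.2 hT, (congrArg h hξ.apply_zero).le⟩

lemma avoidValue_nonneg (hh0 : ∀ x, 0 ≤ h x) (T : ℝ) : 0 ≤ avoidValue f U h x T := by
  refine Real.sSup_nonneg ?_
  rintro _ ⟨u, ξ, -, -, rfl⟩
  exact Real.sInf_nonneg (forall_mem_image.2 fun _ _ => hh0 _)

lemma le_avoidValue (hh0 : ∀ x, 0 ≤ h x) {T c : ℝ} (hT : 0 ≤ T) (hu : IsControl U u)
    (hξ : IsTrajectory f x u ξ) (hc : ∀ t ∈ Icc 0 T, c ≤ h (ξ t)) :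
    c ≤ avoidValue f U h x T := by
  have hbdd : BddAbove {y : ℝ | ∃ u ξ, IsControl U u ∧ IsTrajectory f x u ξ ∧
      y = sInf ((fun t => h (ξ t)) '' Icc 0 T)} := by
    refine ⟨h x, ?_⟩
    rintro _ ⟨u, ξ, -, hξ, rfl⟩
    exact (sInf_image_Icc_le hh0 (left_mem_Icc.2 hT)).trans_eq (congrArg h hξ.apply_zero)
  exact (le_csInf ((nonempty_Icc.2 hT).image _) (forall_mem_image.2 hc)).trans
    (le_csSup hbdd ⟨u, ξ, hu, hξ, rfl⟩)

theorem isViscosityCBF_zero_of_avoidValue_eq (hU : IsCompact U)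
    (hcont : ∀ x, ContinuousOn (f x) U) (hlip : ∀ u ∈ U, LipschitzWith K (f · u))
    (hh : Continuous h) (hh0 : ∀ x, 0 ≤ h x)
    (hV : ∀ x T, 0 ≤ T → avoidValue f U h x T = h x) : IsViscosityCBF f U 0 h := by
  refine ⟨hh, fun x hx φ hφ hmax => ?_⟩
  rw [Pi.zero_apply, neg_zero]
  by_contra! hneg
  have hdecay : ∀ u ∈ U, fderiv ℝ φ x (f x u) ≤
      -(-sSup ((fun u => fderiv ℝ φ x (f x u)) '' U)) := fun u hu => by
    rw [neg_neg]
    exact le_csSup (hU.image_of_continuousOn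
      ((fderiv ℝ φ x).continuous.comp_continuousOn (hcont x))).bddAbove (mem_image_of_mem _ hu)
  set δ := -sSup ((fun u => fderiv ℝ φ x (f x u)) '' U)
  have hδ : 0 < δ := neg_pos.2 hneg
  obtain ⟨t, ⟨hdec, hsmall⟩, ht : 0 < t⟩ := ((eventually_forall_isTrajectory_apply_le hU hcont hlip
    (hφ.differentiable one_ne_zero x) hmax hδ hdecay).and
    (eventually_const_mul_lt (δ / 2) hx)).and self_mem_nhdsWithin |>.exists
  have hle : avoidValue f U h x t ≤ h x - δ / 2 * t :=
    avoidValue_le_of_forall hh0 (by linarith) fun u ξ hu hξ =>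
      ⟨t, right_mem_Icc.2 ht.le, hdec u ξ hu hξ⟩
  rw [hV x t ht.le] at hle
  linarith [mul_pos (half_pos hδ) ht]

theorem IsViscosityCBF.avoidValue_eq (hcbf : IsViscosityCBF f U 0 h) (hU : IsCompact U)
    (hUne : U.Nonempty) (hcont : ∀ x, ContinuousOn (f x) U)
    (hlip : ∀ u ∈ U, LipschitzWith K (f · u)) (hh0 : ∀ x, 0 ≤ h x) {T : ℝ} (hT : 0 ≤ T) :
    avoidValue f U h x T = h x := by
  refine (avoidValue_le hh0 hT).antisymm (le_of_forall_lt_imp_le_of_dense fun c hcx => ?_)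
  rcases lt_or_ge c 0 with hc | hc
  · exact hc.le.trans (avoidValue_nonneg hh0 T)
  let e : EuclideanSpace ℝ (Fin n) ≃L[ℝ] (Fin n → ℝ) := EuclideanSpace.equiv (Fin n) ℝ
  have hcont0 : ContinuousOn (conjDynamics e f 0) U :=
    e.symm.continuous.comp_continuousOn (hcont (e 0))
  obtain ⟨C, hC⟩ := hU.exists_bound_of_continuousOn hcont0
  obtain ⟨u, ξ, hξ, hsafe⟩ := (hcbf.isProximalCBF hU hUne hcont e).exists_trajectory_le hUne
    (hcbf.1.comp e.continuous) (fun u hu => lipschitzWith_conjDynamics e (hlip u hu)) hC hc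
    (show c < (h ∘ e) (e.symm x) by simpa using hcx) T
  have hξ' := hξ.of_conjDynamics.isTrajectory hU hcont hlip
  rw [e.apply_symm_apply] at hξ'
  exact le_avoidValue hh0 hT ⟨hξ.measurable_control, hξ.control_mem⟩ hξ' hsafe

end AvoidProblem

theorem avoid_value_time_invariant_iff_general {n m : ℕ}
    (f : (Fin n → ℝ) → (Fin m → ℝ) → Fin n → ℝ) (U : Set (Fin m → ℝ))
    (hU : IsCompact U) (hUne : U.Nonempty)
    (hcont : ∀ x, ContinuousOn (f x) U)
    (hlip : ∃ K : NNReal, ∀ u ∈ U, LipschitzWith K (f · u))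
    (h : (Fin n → ℝ) → ℝ) (hh : Continuous h) (hh0 : ∀ x, 0 ≤ h x) :
    (∀ x : Fin n → ℝ, ∀ T : ℝ, 0 ≤ T →
      sSup {y : ℝ | ∃ u ξ, IsControl U u ∧ IsTrajectory f x u ξ ∧
        y = sInf ((fun t => h (ξ t)) '' Set.Icc 0 T)} = h x) ↔
      ∀ α : ℝ → ℝ, IsLocallyLipschitzClassK α → IsViscosityCBF f U α h := by
  obtain ⟨K, hlip⟩ := hlip
  rw [forall_isViscosityCBF_iff]
  exact ⟨isViscosityCBF_zero_of_avoidValue_eq hU hcont hlip hh hh0,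
    fun hcbf _ _ => hcbf.avoidValue_eq hU hUne hcont hlip hh0⟩

/-- The avoid value function
`V (x,T) = sup_{(u,ξ)} min_{t ∈ [0,T]} h (ξ t)` is time-invariant (`V (x,T) = h x` for all
`x` and `T ≥ 0`) iff `h` is a viscosity CBF with respect to every locally Lipschitz class
`K` function `α`. -/
theorem avoid_value_time_invariant_iff {n m : ℕ}
    (f : (Fin n → ℝ) → (Fin m → ℝ) → Fin n → ℝ) (U : Set (Fin m → ℝ))
    (hU : IsCompact U) (hUne : U.Nonempty)
    (hf : ∃ K : NNReal, LipschitzOnWith K (Function.uncurry f) (Set.univ ×ˢ U))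
    (h : (Fin n → ℝ) → ℝ) (hh : Continuous h) (hh0 : ∀ x, 0 ≤ h x) :
    (∀ x : Fin n → ℝ, ∀ T : ℝ, 0 ≤ T →
      sSup {y : ℝ | ∃ u ξ, IsControl U u ∧ IsTrajectory f x u ξ ∧
        y = sInf ((fun t => h (ξ t)) '' Set.Icc 0 T)} = h x) ↔
      ∀ α : ℝ → ℝ, IsLocallyLipschitzClassK α → IsViscosityCBF f U α h := by
  obtain ⟨K, hK⟩ := hf
  exact avoid_value_time_invariant_iff_general f U hU hUne
    (fun x => hK.continuousOn.uncurry_left x (mem_univ x))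
    ⟨K * 1, fun u hu => lipschitzOnWith_univ.1 <|
      hK.comp (LipschitzWith.prodMk_right u).lipschitzOnWith fun x _ => ⟨mem_univ x, hu⟩⟩ h hh hh0
end
end

section
/- Let h₁, h₂ : ℝ^n → ℝ be viscosity CBFs with respect to a class K function α. Then the function x ↦ max{h₁(x), h₂(x)} is also a viscosity CBF with respect to α. -/
open Set Filter MeasureTheory Topology

noncomputable section

/- A test function touching `g` from above at `x` also touches from above at `x` every `h` that
lies below `g` near `x` and meets it there. -/
theorem IsViscosityCBF.of_forall_exists_eventuallyLE {n m : ℕ}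
    {f : (Fin n → ℝ) → (Fin m → ℝ) → Fin n → ℝ} {U : Set (Fin m → ℝ)} {α : ℝ → ℝ}
    {g : (Fin n → ℝ) → ℝ} (hg : Continuous g)
    (hbelow : ∀ x, 0 < g x → ∃ h, IsViscosityCBF f U α h ∧ h ≤ᶠ[𝓝 x] g ∧ h x = g x) :
    IsViscosityCBF f U α g := by
  refine ⟨hg, fun x hx φ hφ hmax => ?_⟩
  obtain ⟨h, hh, hle, heq⟩ := hbelow x hx
  have hle_sub : (fun y => h y - φ y) ≤ᶠ[𝓝 x] fun y => g y - φ y :=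
    hle.mono fun y hy => sub_le_sub_right hy (φ y)
  have hmax' : IsLocalMax (fun y => h y - φ y) x := hle_sub.isLocalMax (by rw [heq]) hmax
  rw [← heq] at hx ⊢
  exact hh.2 x hx φ hφ hmax'

theorem isViscosityCBF_max_general {n m : ℕ}
    {f : (Fin n → ℝ) → (Fin m → ℝ) → Fin n → ℝ} {U : Set (Fin m → ℝ)} {α : ℝ → ℝ}
    {h₁ h₂ : (Fin n → ℝ) → ℝ}
    (hh₁ : IsViscosityCBF f U α h₁) (hh₂ : IsViscosityCBF f U α h₂) :
    IsViscosityCBF f U α (fun x => max (h₁ x) (h₂ x)) := by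
  refine .of_forall_exists_eventuallyLE (hh₁.1.max hh₂.1) fun x _ => ?_
  rcases le_total (h₂ x) (h₁ x) with hle | hle
  · exact ⟨h₁, hh₁, .of_forall fun _ => le_max_left _ _, (max_eq_left hle).symm⟩
  · exact ⟨h₂, hh₂, .of_forall fun _ => le_max_right _ _, (max_eq_right hle).symm⟩

/-- The pointwise maximum of two viscosity CBFs w.r.t. `α` is a viscosity
CBF w.r.t. `α`. -/
theorem isViscosityCBF_max {n m : ℕ}
    (f : (Fin n → ℝ) → (Fin m → ℝ) → Fin n → ℝ) (U : Set (Fin m → ℝ))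
    (hU : IsCompact U)
    (hf : ∃ K : NNReal, LipschitzOnWith K (Function.uncurry f) (Set.univ ×ˢ U))
    (α : ℝ → ℝ) (hα : IsClassK α)
    (h₁ h₂ : (Fin n → ℝ) → ℝ)
    (hh₁ : IsViscosityCBF f U α h₁) (hh₂ : IsViscosityCBF f U α h₂) :
    IsViscosityCBF f U α (fun x => max (h₁ x) (h₂ x)) :=
  isViscosityCBF_max_general hh₁ hh₂
end
end

section
/- Let h₁, h₂, … : ℝ^n → ℝ be a sequence of viscosity CBFs with respect to a class K function α, and suppose hᵢ → h locally uniformly, where h : ℝ^n → [0,∞). Then h is also a viscosity CBF with respect to α. -/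
open Set Filter MeasureTheory Topology

noncomputable section

/-!
Viscosity inequalities are stable because a *strict* local maximum survives locally uniform
perturbation. Adding to the test function `φ` the square of a Euclidean distance to `x` makes the
maximum of `h - φ` at `x` strict and leaves the gradient at `x` unchanged. For large `i`, `hᵢ` minus
the new test function has a local maximum at some `zᵢ`, with `zᵢ → x`. The viscosity
inequality of `hᵢ` at `zᵢ` passes to the limit because its right-hand side, a maximum over a compact
set of controls, is continuous in the state.
-/

section PerturbedMaximum

variable {ι X R : Type*} [TopologicalSpace X] [LinearOrder R] [UniformSpace R]
  [OrderClosedTopology R] {l : Filter ι} {G : ι → X → R} {g : X → R} {K : Set X} {x : X}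

theorem tendsto_of_isMaxOn_of_tendstoUniformlyOn {z : ι → X} (hK : IsCompact K)
    (hg : ContinuousOn g K) (hG : TendstoUniformlyOn G g l K) (hxK : x ∈ K)
    (hx : ∀ y ∈ K, y ≠ x → g y < g x) (hzK : ∀ᶠ i in l, z i ∈ K)
    (hz : ∀ᶠ i in l, IsMaxOn (G i) K (z i)) : Tendsto z l (𝓝 x) := by
  refine hK.tendsto_nhds_of_unique_mapClusterPt hzK fun y hyK hy => ?_
  obtain ⟨𝒰, h𝒰l, hzy⟩ := mapClusterPt_iff_ultrafilter.1 hy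
  have hG𝒰 : TendstoUniformlyOn G g 𝒰 K := fun u hu => h𝒰l (hG u hu)
  have hGz : Tendsto (fun i => G i (z i)) 𝒰 (𝓝 (g y)) :=
    hG𝒰.tendsto_comp (hg y hyK) (tendsto_nhdsWithin_iff.2 ⟨hzy, h𝒰l hzK⟩)
  have hxy : g x ≤ g y :=
    le_of_tendsto_of_tendsto (hG𝒰.tendsto_at hxK) hGz (h𝒰l (hz.mono fun _ hi => hi hxK))
  by_contra hne
  exact (hx y hyK hne).not_ge hxy

theorem exists_tendsto_isLocalMax_of_tendstoLocallyUniformly [LocallyCompactSpace X]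
    (hGc : ∀ i, Continuous (G i)) (hg : Continuous g) (hG : TendstoLocallyUniformly G g l)
    (hx : ∀ᶠ y in 𝓝[≠] x, g y < g x) :
    ∃ z : ι → X, Tendsto z l (𝓝 x) ∧ ∀ᶠ i in l, IsLocalMax (G i) (z i) := by
  obtain ⟨K, hKx, hKmax, hK⟩ := local_compact_nhds (eventually_nhdsWithin_iff.1 hx)
  have hxK : x ∈ K := mem_of_mem_nhds hKx
  choose z hzK hzmax using fun i => hK.exists_isMaxOn ⟨x, hxK⟩ (hGc i).continuousOn
  have hGK : TendstoUniformlyOn G g l K :=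
    (tendstoLocallyUniformlyOn_iff_tendstoUniformlyOn_of_compact hK).1
      hG.tendstoLocallyUniformlyOn
  have hz : Tendsto z l (𝓝 x) :=
    tendsto_of_isMaxOn_of_tendstoUniformlyOn hK hg.continuousOn hGK hxK hKmax
      (.of_forall hzK) (.of_forall hzmax)
  refine ⟨z, hz, ?_⟩
  filter_upwards [hz.eventually (eventually_mem_nhds_iff.2 hKx)] with i hi
  exact (hzmax i).isLocalMax hi

end PerturbedMaximum

section StrictTestFunction

variable {E : Type*} [NormedAddCommGroup E] [NormedSpace ℝ E] [FiniteDimensional ℝ E]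
  {k : WithTop ℕ∞}

theorem contDiff_euclideanDist_sq (x : E) : ContDiff ℝ k fun y => Euclidean.dist y x ^ 2 := by
  simp only [Euclidean.dist, dist_eq_norm]
  exact ((toEuclidean.contDiff).sub contDiff_const).norm_sq ℝ

theorem fderiv_euclideanDist_sq_self (x : E) :
    fderiv ℝ (fun y => Euclidean.dist y x ^ 2) x = 0 :=
  IsLocalMin.fderiv_eq_zero <| .of_forall fun y => by simp [Euclidean.dist]

theorem exists_contDiff_strictLocalMax_sub {h φ : E → ℝ} {x : E} (hk : k ≠ 0)
    (hφ : ContDiff ℝ k φ) (hmax : IsLocalMax (fun y => h y - φ y) x) :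
    ∃ ψ : E → ℝ, ContDiff ℝ k ψ ∧ fderiv ℝ ψ x = fderiv ℝ φ x ∧
      ∀ᶠ y in 𝓝[≠] x, h y - ψ y < h x - ψ x := by
  have hq : ContDiff ℝ k fun y => Euclidean.dist y x ^ 2 := contDiff_euclideanDist_sq x
  refine ⟨fun y => φ y + Euclidean.dist y x ^ 2, hφ.add hq, ?_, ?_⟩
  · rw [fderiv_fun_add (hφ.differentiable hk x) (hq.differentiable hk x),
      fderiv_euclideanDist_sq_self, add_zero]
  · filter_upwards [hmax.filter_mono nhdsWithin_le_nhds, self_mem_nhdsWithin] with y hy hyx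
    have hpos : 0 < Euclidean.dist y x ^ 2 :=
      pow_pos (dist_pos.2 (toEuclidean.injective.ne hyx)) 2
    have hzero : Euclidean.dist x x = 0 := dist_self _
    rw [hzero]
    linarith

end StrictTestFunction

theorem continuous_sSup_image_of_continuousOn_prod {X Y R : Type*} [TopologicalSpace X]
    [TopologicalSpace Y] [ConditionallyCompleteLinearOrder R] [TopologicalSpace R]
    [OrderTopology R] {F : X → Y → R} {K : Set Y} (hK : IsCompact K)
    (hF : ContinuousOn (Function.uncurry F) (univ ×ˢ K)) :
    Continuous fun x => sSup (F x '' K) := by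
  have hFK : Continuous fun p : X × K => F p.1 p.2 :=
    hF.comp_continuous (f := fun p : X × K => (p.1, (p.2 : Y))) (by fun_prop)
      fun p => ⟨mem_univ _, p.2.2⟩
  have himage (x : X) : (fun u : K => F x u) '' univ = F x '' K := by
    rw [image_univ, image_eq_range]
  simpa only [himage] using
    (isCompact_iff_isCompact_univ.1 hK).continuous_sSup (f := fun x (u : K) => F x u) hFK

theorem continuous_sSup_fderiv_apply {E V : Type*} [NormedAddCommGroup E] [NormedSpace ℝ E]
    [TopologicalSpace V] {f : E → V → E} {U : Set V} {ψ : E → ℝ} (hU : IsCompact U)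
    (hf : ContinuousOn (Function.uncurry f) (univ ×ˢ U)) (hψ : ContDiff ℝ 1 ψ) :
    Continuous fun y => sSup ((fun u => fderiv ℝ ψ y (f y u)) '' U) :=
  continuous_sSup_image_of_continuousOn_prod hU <|
    ((hψ.continuous_fderiv one_ne_zero).comp continuous_fst).continuousOn.clm_apply hf

theorem isViscosityCBF_of_tendstoLocallyUniformly_general {n m : ℕ} {ι : Type*} {l : Filter ι}
    [l.NeBot] {f : (Fin n → ℝ) → (Fin m → ℝ) → Fin n → ℝ} {U : Set (Fin m → ℝ)}
    (hU : IsCompact U) (hf : ContinuousOn (Function.uncurry f) (univ ×ˢ U))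
    {α : ℝ → ℝ} (hα : ContinuousOn α (Ioi 0)) {hseq : ι → (Fin n → ℝ) → ℝ}
    (hCBF : ∀ i, IsViscosityCBF f U α (hseq i)) {h : (Fin n → ℝ) → ℝ}
    (hlim : TendstoLocallyUniformly hseq h l) : IsViscosityCBF f U α h := by
  have hh : Continuous h := hlim.continuous (.of_forall fun i => (hCBF i).1)
  refine ⟨hh, fun x hx φ hφ hmax => ?_⟩
  obtain ⟨ψ, hψ, hψφ, hψmax⟩ := exists_contDiff_strictLocalMax_sub one_ne_zero hφ hmax
  have hconst : TendstoLocallyUniformly (fun _ => ψ) ψ l :=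
    fun _ hu _ => ⟨univ, univ_mem, .of_forall fun _ _ _ => refl_mem_uniformity hu⟩
  have hsub : TendstoLocallyUniformly (fun i y => hseq i y - ψ y) (fun y => h y - ψ y) l :=
    hlim.fun_sub hconst
  obtain ⟨z, hz, hzmax⟩ := exists_tendsto_isLocalMax_of_tendstoLocallyUniformly
    (fun i => (hCBF i).1.sub hψ.continuous) (hh.sub hψ.continuous) hsub hψmax
  have hhz : Tendsto (fun i => hseq i (z i)) l (𝓝 (h x)) :=
    hlim.tendsto_comp hh.continuousAt hz
  rw [← hψφ]
  refine le_of_tendsto_of_tendsto ((hα.continuousAt (Ioi_mem_nhds hx)).tendsto.comp hhz).neg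
    (((continuous_sSup_fderiv_apply hU hf hψ).tendsto x).comp hz) ?_
  filter_upwards [hzmax, hhz.eventually (lt_mem_nhds hx)] with i hi hpos
  exact (hCBF i).2 (z i) hpos ψ hψ hi

/-- A locally uniform limit `h ≥ 0` of a sequence of viscosity CBFs w.r.t.
`α` is a viscosity CBF w.r.t. `α`. -/
theorem isViscosityCBF_of_tendstoLocallyUniformly {n m : ℕ}
    (f : (Fin n → ℝ) → (Fin m → ℝ) → Fin n → ℝ) (U : Set (Fin m → ℝ))
    (hU : IsCompact U)
    (hf : ∃ K : NNReal, LipschitzOnWith K (Function.uncurry f) (Set.univ ×ˢ U))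
    (α : ℝ → ℝ) (hα : IsClassK α)
    (hseq : ℕ → (Fin n → ℝ) → ℝ)
    (hCBF : ∀ i : ℕ, IsViscosityCBF f U α (hseq i))
    (h : (Fin n → ℝ) → ℝ) (hh0 : ∀ x, 0 ≤ h x)
    (hlim : TendstoLocallyUniformly hseq h Filter.atTop) :
    IsViscosityCBF f U α h := by
  obtain ⟨K, hK⟩ := hf
  exact isViscosityCBF_of_tendstoLocallyUniformly_general hU hK.continuousOn
    (hα.1.mono Ioi_subset_Ici_self) hCBF hlim
end
end

section
/- Consider the scalar system with dynamics f(x,u) = x + ((x + x³)/(1 + |x|))·u and admissible control set U = [−1, +1]. The function h : ℝ → ℝ given by h(x) = 1 − |x| is a viscosity CBF for this system with respect to the class K function α(r) = r. -/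
/-!
The constant control `u = -1` works at every point. Where `x ≠ 0`, the function `h x = 1 - |x|` is
differentiable, so a test function touching it from above has derivative `-sign x`, and with
`r = |x|` the inequality becomes `2 * r - 1 ≤ (r + r ^ 3) / (1 + r)`, that is
`0 ≤ (1 - r) * (1 + r * (1 - r))`. The kink `x = 0` is an equilibrium for every control, so there
the derivative of the test function is irrelevant.
-/

open Set Filter MeasureTheory Topology

noncomputable section

/-- `h : ℝ → ℝ` is a viscosity CBF for the scalar system `ẋ = f(x,u)`, `u ∈ U`, with respect
to the class `K` function `α`. -/
def IsViscosityCBF1 (f : ℝ → ℝ → ℝ) (U : Set ℝ) (α : ℝ → ℝ) (h : ℝ → ℝ) : Prop :=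
  Continuous h ∧
    ∀ x : ℝ, 0 < h x →
      ∀ φ : ℝ → ℝ, ContDiff ℝ 1 φ →
        IsLocalMax (fun y => h y - φ y) x →
        -α (h x) ≤ sSup ((fun u => fderiv ℝ φ x (f x u)) '' U)

theorem fderiv_eq_of_isLocalMax_sub {E : Type*} [NormedAddCommGroup E] [NormedSpace ℝ E]
    {h φ : E → ℝ} {x : E} (hmax : IsLocalMax (fun y => h y - φ y) x)
    (hh : DifferentiableAt ℝ h x) (hφ : DifferentiableAt ℝ φ x) :
    fderiv ℝ φ x = fderiv ℝ h x :=
  (sub_eq_zero.mp (hmax.hasFDerivAt_eq_zero (hh.hasFDerivAt.sub hφ.hasFDerivAt))).symm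

theorem IsViscosityCBF1.of_feedback {f : ℝ → ℝ → ℝ} {U : Set ℝ} {α h : ℝ → ℝ} (k : ℝ → ℝ)
    (hU : IsCompact U) (hf : ∀ x, ContinuousOn (f x) U) (hh : Continuous h)
    (hk : ∀ x, 0 < h x → k x ∈ U)
    (hdecay : ∀ x, 0 < h x →
      (DifferentiableAt ℝ h x ∧ -α (h x) ≤ fderiv ℝ h x (f x (k x))) ∨
        (f x (k x) = 0 ∧ 0 ≤ α (h x))) :
    IsViscosityCBF1 f U α h := by
  refine ⟨hh, fun x hx φ hφ hmax => ?_⟩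
  have hbdd : BddAbove ((fun u => fderiv ℝ φ x (f x u)) '' U) :=
    hU.bddAbove_image ((fderiv ℝ φ x).continuous.comp_continuousOn (hf x))
  suffices hfeedback : -α (h x) ≤ fderiv ℝ φ x (f x (k x)) from
    hfeedback.trans (le_csSup hbdd (mem_image_of_mem _ (hk x hx)))
  rcases hdecay x hx with ⟨hdiff, hle⟩ | ⟨hequilibrium, hα⟩
  · rwa [fderiv_eq_of_isLocalMax_sub hmax hdiff (hφ.differentiable one_ne_zero x)]
  · rw [hequilibrium, map_zero]
    exact neg_nonpos.mpr hα

theorem fderiv_one_sub_abs {x : ℝ} (hx : x ≠ 0) (v : ℝ) :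
    fderiv ℝ (fun y : ℝ => 1 - |y|) x v = -(SignType.sign x * v) := by
  rw [((hasDerivAt_abs hx).const_sub 1).hasFDerivAt.fderiv]
  simp [mul_comm]

theorem sign_mul_add_pow_three (x : ℝ) : SignType.sign x * (x + x ^ 3) = |x| + |x| ^ 3 := by
  calc SignType.sign x * (x + x ^ 3)
    _ = SignType.sign x * x + SignType.sign x * x * x ^ 2 := by ring
    _ = |x| + |x| ^ 3 := by rw [sign_mul_self, ← sq_abs x]; ring

theorem two_mul_sub_one_le_div {r : ℝ} (hr₀ : 0 ≤ r) (hr₁ : r ≤ 1) :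
    2 * r - 1 ≤ (r + r ^ 3) / (1 + r) := by
  have hfactor : 0 ≤ (1 - r) * (1 + r * (1 - r)) := by
    have : 0 ≤ 1 - r := sub_nonneg.mpr hr₁
    positivity
  rw [le_div_iff₀ (by positivity)]
  linarith

theorem neg_one_sub_abs_le_fderiv {x : ℝ} (hx₀ : x ≠ 0) (hx₁ : |x| ≤ 1) :
    -(1 - |x|) ≤ fderiv ℝ (fun y : ℝ => 1 - |y|) x (x + (x + x ^ 3) / (1 + |x|) * -1) := by
  calc -(1 - |x|)
    _ ≤ -|x| + (|x| + |x| ^ 3) / (1 + |x|) := by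
        linarith [two_mul_sub_one_le_div (abs_nonneg x) hx₁]
    _ = -(SignType.sign x * (x + (x + x ^ 3) / (1 + |x|) * -1)) := by
        rw [← sign_mul_add_pow_three]
        nth_rw 1 [← sign_mul_self x]
        ring
    _ = _ := (fderiv_one_sub_abs hx₀ _).symm

/-- For the scalar system `ẋ = x + ((x + x³)/(1 + |x|)) u`, `u ∈ [-1,1]`,
the function `h x = 1 - |x|` is a viscosity CBF with respect to `α r = r`. -/
theorem example_viscosity_cbf :
    IsViscosityCBF1 (fun x u => x + ((x + x ^ 3) / (1 + |x|)) * u)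
      (Set.Icc (-1 : ℝ) 1) (fun r => r) (fun x => 1 - |x|) := by
  refine .of_feedback (fun _ => -1) isCompact_Icc (fun x => by fun_prop) (by fun_prop)
    (fun _ _ => by simp) fun x hx => ?_
  rcases eq_or_ne x 0 with rfl | hx₀
  · right
    simp
  · exact .inl ⟨(differentiableAt_abs hx₀).const_sub 1,
      neg_one_sub_abs_le_fderiv hx₀ (sub_pos.mp hx).le⟩
end
end

section
/- Let α be a locally Lipschitz class K function and let R > 0. Then there exists L > 0 such that β_α(r,t) ≥ r·e^{−Lt} for all r ∈ [0,R] and all t ≥ 0. -/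
open Set Filter MeasureTheory Topology

noncomputable section

/-- `β` is the function `β_α`: for each `r ≥ 0`, `t ↦ β r t` solves `y' = -α y`, `y 0 = r`,
staying in `[0, r]` for all `t ≥ 0`. -/
def IsBetaFor (α : ℝ → ℝ) (β : ℝ → ℝ → ℝ) : Prop :=
  ∀ r : ℝ, 0 ≤ r →
    β r 0 = r ∧ ∀ t : ℝ, 0 ≤ t →
      0 ≤ β r t ∧ β r t ≤ r ∧ HasDerivWithinAt (β r) (-α (β r t)) (Set.Ici 0) t

/-! On `[0, R]` one has `α y ≤ L * y`: on `[0, ε)` by the Lipschitz bound at `0`, and on `[ε, R]`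
because `α y ≤ M ≤ (M / ε) * y` for an upper bound `M ≥ 0` of `α`. Solutions of `y' = -α y` that
start in `[0, R]` stay there, so `y' ≥ -L * y`, and Grönwall's inequality applies to `-y`. -/

section LinearBound

variable {𝕜 : Type*} [Field 𝕜] [LinearOrder 𝕜] [IsStrictOrderedRing 𝕜] [TopologicalSpace 𝕜]
  [OrderTopology 𝕜]

theorem exists_pos_forall_le_mul_of_eventually_le_mul {f : 𝕜 → 𝕜} {C : 𝕜} {S : Set 𝕜}
    (hzero : ∀ᶠ y in 𝓝[≥] 0, f y ≤ C * y) (hS : S ⊆ Ici 0) (hbdd : BddAbove (f '' S)) :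
    ∃ L, 0 < L ∧ ∀ y ∈ S, f y ≤ L * y := by
  obtain ⟨ε, hε : 0 < ε, hnear⟩ := mem_nhdsGE_iff_exists_Ico_subset.1 hzero
  obtain ⟨M, hM⟩ := hbdd
  refine ⟨max 1 (max C (|M| / ε)), lt_max_of_lt_left one_pos, fun y hy ↦ ?_⟩
  have hy₀ : 0 ≤ y := hS hy
  rcases lt_or_ge y ε with hyε | hεy
  · calc f y ≤ C * y := hnear ⟨hy₀, hyε⟩
      _ ≤ max 1 (max C (|M| / ε)) * y := by gcongr; simp
  · calc f y ≤ M := hM (mem_image_of_mem f hy)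
      _ ≤ |M| := le_abs_self M
      _ = |M| / ε * ε := (div_mul_cancel₀ _ hε.ne').symm
      _ ≤ |M| / ε * y := by gcongr
      _ ≤ max 1 (max C (|M| / ε)) * y := by gcongr; simp

end LinearBound

theorem mul_exp_neg_le_of_neg_mul_le_deriv_right {y y' : ℝ → ℝ} {L a b : ℝ}
    (hy : ContinuousOn y (Icc a b)) (hy' : ∀ t ∈ Ico a b, HasDerivWithinAt y (y' t) (Ici t) t)
    (bound : ∀ t ∈ Ico a b, -L * y t ≤ y' t) :
    ∀ t ∈ Icc a b, y a * Real.exp (-L * (t - a)) ≤ y t := by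
  intro t ht
  have hneg : -y t ≤ gronwallBound (-y a) (-L) 0 (t - a) :=
    le_gronwallBound_of_liminf_deriv_right_le hy.neg
      (fun s hs _ hr ↦ (hy' s hs).neg.liminf_right_slope_le hr) le_rfl
      (fun s hs ↦ by rw [Pi.neg_apply]; linarith [bound s hs]) t ht
  rw [gronwallBound_ε0] at hneg
  linarith

theorem IsClassK.bddAbove_image_Icc {α : ℝ → ℝ} (hα : IsClassK α) (R : ℝ) :
    BddAbove (α '' Icc 0 R) :=
  isCompact_Icc.bddAbove_image (hα.1.mono Icc_subset_Ici_self)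

theorem IsLocallyLipschitzClassK.exists_eventually_le_mul {α : ℝ → ℝ}
    (hα : IsLocallyLipschitzClassK α) : ∃ C, ∀ᶠ y in 𝓝[≥] 0, α y ≤ C * y := by
  obtain ⟨⟨-, -, hα₀⟩, hlip⟩ := hα
  obtain ⟨K, s, hs, hK⟩ := hlip 0 self_mem_Ici
  refine ⟨K, ?_⟩
  filter_upwards [hs, self_mem_nhdsWithin] with y hys hy
  have h₀s : (0 : ℝ) ∈ s := mem_of_mem_nhdsWithin self_mem_Ici hs
  calc α y ≤ |α y| := le_abs_self _
    _ ≤ K * |y| := by simpa [hα₀, Real.dist_eq] using hK.dist_le_mul y hys 0 h₀s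
    _ = K * y := by rw [abs_of_nonneg hy]

theorem IsBetaFor.mul_exp_neg_le {α : ℝ → ℝ} {β : ℝ → ℝ → ℝ} (hβ : IsBetaFor α β) {L r t : ℝ}
    (hr : 0 ≤ r) (hlin : ∀ y ∈ Icc 0 r, α y ≤ L * y) (ht : 0 ≤ t) :
    r * Real.exp (-L * t) ≤ β r t := by
  obtain ⟨hinit, hsol⟩ := hβ r hr
  have hcont : ContinuousOn (β r) (Icc 0 t) := fun s hs ↦
    (hsol s hs.1).2.2.continuousWithinAt.mono Icc_subset_Ici_self
  have hderiv : ∀ s ∈ Ico 0 t, HasDerivWithinAt (β r) (-α (β r s)) (Ici s) s := fun s hs ↦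
    (hsol s hs.1).2.2.mono (Ici_subset_Ici.2 hs.1)
  have hbound : ∀ s ∈ Ico 0 t, -L * β r s ≤ -α (β r s) := fun s hs ↦ by
    obtain ⟨hnonneg, hle, -⟩ := hsol s hs.1
    linarith [hlin (β r s) ⟨hnonneg, hle⟩]
  simpa only [hinit, sub_zero] using
    mul_exp_neg_le_of_neg_mul_le_deriv_right hcont hderiv hbound t ⟨ht, le_rfl⟩

theorem beta_exponential_lower_bound_general {α : ℝ → ℝ} {β : ℝ → ℝ → ℝ} (hβ : IsBetaFor α β)
    {C R : ℝ} (hzero : ∀ᶠ y in 𝓝[≥] 0, α y ≤ C * y) (hbdd : BddAbove (α '' Icc 0 R)) :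
    ∃ L : ℝ, 0 < L ∧ ∀ r ∈ Icc 0 R, ∀ t : ℝ, 0 ≤ t → r * Real.exp (-L * t) ≤ β r t := by
  obtain ⟨L, hL, hlin⟩ :=
    exists_pos_forall_le_mul_of_eventually_le_mul hzero Icc_subset_Ici_self hbdd
  exact ⟨L, hL, fun r hr _ ht ↦
    hβ.mul_exp_neg_le hr.1 (fun y hy ↦ hlin y ⟨hy.1, hy.2.trans hr.2⟩) ht⟩

/-- For every `R > 0` there is `L > 0` with `β_α r t ≥ r * exp (-L * t)`
for all `r ∈ [0,R]` and `t ≥ 0`. -/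
theorem beta_exponential_lower_bound
    (α : ℝ → ℝ) (hα : IsLocallyLipschitzClassK α)
    (β : ℝ → ℝ → ℝ) (hβ : IsBetaFor α β)
    (R : ℝ) (hR : 0 < R) :
    ∃ L : ℝ, 0 < L ∧ ∀ r ∈ Set.Icc (0 : ℝ) R, ∀ t : ℝ, 0 ≤ t →
      r * Real.exp (-L * t) ≤ β r t := by
  obtain ⟨C, hC⟩ := hα.exists_eventually_le_mul
  exact beta_exponential_lower_bound_general hβ hC (hα.1.bddAbove_image_Icc R)
end
end
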